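/- Let f ∈ ℚ[X₁,…,Xₙ], let e ≥ 0 be an integer, set d = e + ⌈deg(f)/2⌉, and let 𝒯 be a subset of the set of monomials of total degree ≤ e. Then f ∉ RSOS(𝒯) if and only if the semidefinite program inf { s : M_d(y) ⪰ 0 and M_e((−f)y) + s·I ⪰ 0 } (where y ranges over sequences indexed by multi-indices of degree ≤ 2d, and the localizing matrix M_e((−f)y) has rows and columns indexed by the exponents of the monomials in 𝒯) has optimal value −∞; that is, for every s₀ ∈ ℝ there exist y and s < s₀ with M_d(y) ⪰ 0 and M_e((−f)y) + s·I ⪰ 0. -/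

import Mathlib

open MvPolynomial

/-- Exponent multi-indices in `n` variables of total degree at most `d`
(the exponents of the monomials of total degree `≤ d`). -/
abbrev Idx (n d : ℕ) : Type := {α : Fin n →₀ ℕ // α.degree ≤ d}

noncomputable instance (n d : ℕ) : Fintype (Idx n d) :=
  Set.Finite.fintype (s := {α : Fin n →₀ ℕ | α.degree ≤ d}) <| by
    apply Set.Finite.subset
      (Set.finite_Iic (Finsupp.equivFunOnFinite.symm fun _ : Fin n => d))
    intro α hα
    simp only [Set.mem_Iic, Finsupp.le_def]
    intro i
    exact le_trans (Finsupp.le_degree i α) hα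

/-- `f ∈ RSOS(𝒯)` : there are polynomials `u₁,…,u_l, v₁,…,v_{l'}` with
`supp(vⱼ) ⊆ 𝒯` for all `j` and `Σⱼ vⱼ² ≠ 0` such that `f · Σⱼ vⱼ² = Σᵢ uᵢ²`. -/
def RSOS (n : ℕ) (𝒯 : Finset (Fin n →₀ ℕ)) (f : MvPolynomial (Fin n) ℝ) : Prop :=
  ∃ (l l' : ℕ) (u : Fin l → MvPolynomial (Fin n) ℝ)
    (v : Fin l' → MvPolynomial (Fin n) ℝ),
    (∀ j, (v j).support ⊆ 𝒯) ∧ (∑ j, v j ^ 2) ≠ 0 ∧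
      f * (∑ j, v j ^ 2) = ∑ i, u i ^ 2

/-- `f/g ∈ RSOS(𝒯)` for a rational function `f/g` : there are polynomials
`u₁,…,u_l, v₁,…,v_{l'}` with `supp(vⱼ) ⊆ 𝒯` for all `j` and `Σⱼ vⱼ² ≠ 0`
such that `f · Σⱼ vⱼ² = g · Σᵢ uᵢ²`. -/
def RSOSfrac (n : ℕ) (𝒯 : Finset (Fin n →₀ ℕ)) (f g : MvPolynomial (Fin n) ℝ) : Prop :=
  ∃ (l l' : ℕ) (u : Fin l → MvPolynomial (Fin n) ℝ)
    (v : Fin l' → MvPolynomial (Fin n) ℝ),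
    (∀ j, (v j).support ⊆ 𝒯) ∧ (∑ j, v j ^ 2) ≠ 0 ∧
      f * (∑ j, v j ^ 2) = g * ∑ i, u i ^ 2

/-- The moment matrix of order `t` of a sequence `y`, with rows and columns
indexed by multi-indices of degree `≤ t` and `(α,β)` entry `y_{α+β}`. -/
noncomputable def momentMatrix (n t : ℕ) (y : (Fin n →₀ ℕ) → ℝ) :
    Matrix (Idx n t) (Idx n t) ℝ :=
  fun α β => y (α.1 + β.1)

/-- The localizing moment matrix `M_t(qy)` of order `t`, with `(α,β)` entry
`Σ_γ q_γ y_{γ+α+β}`. -/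
noncomputable def locMomentMatrix (n t : ℕ) (q : MvPolynomial (Fin n) ℝ)
    (y : (Fin n →₀ ℕ) → ℝ) : Matrix (Idx n t) (Idx n t) ℝ :=
  fun α β => ∑ γ ∈ q.support, q.coeff γ * y (γ + α.1 + β.1)

/-- The localizing moment matrix `M(qy)` with rows and columns indexed by the
exponents of the monomials in `𝒯`, with `(α,β)` entry `Σ_γ q_γ y_{γ+α+β}`. -/
noncomputable def locMomentMatrixOn (n : ℕ) (𝒯 : Finset (Fin n →₀ ℕ))
    (q : MvPolynomial (Fin n) ℝ) (y : (Fin n →₀ ℕ) → ℝ) : Matrix 𝒯 𝒯 ℝ :=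
  fun α β => ∑ γ ∈ q.support, q.coeff γ * y (γ + α.1 + β.1)

/-- The linear form `L_y(p) = Σ_α y_α p_α` associated to a sequence `y`. -/
noncomputable def LForm (n : ℕ) (y : (Fin n →₀ ℕ) → ℝ)
    (p : MvPolynomial (Fin n) ℝ) : ℝ :=
  ∑ α ∈ p.support, y α * p.coeff α

/-- `p` is a sum of squares of polynomials. -/
def IsSOS (n : ℕ) (p : MvPolynomial (Fin n) ℝ) : Prop :=
  ∃ (l : ℕ) (u : Fin l → MvPolynomial (Fin n) ℝ), p = ∑ i, u i ^ 2

/-- The convex hull of a compact subset of a finite-dimensional real space is compact. -/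
lemma IsCompact.convexHull_of_finiteDimensional {E : Type*} [NormedAddCommGroup E]
    [NormedSpace ℝ E] [FiniteDimensional ℝ E] {s : Set E} (hs : IsCompact s) :
    IsCompact (convexHull ℝ s) := by
  rcases s.eq_empty_or_nonempty with rfl | ⟨x₀, hx₀⟩
  · simp
  let N := Module.finrank ℝ E + 1
  have hK : IsCompact (stdSimplex ℝ (Fin N) ×ˢ (Set.univ.pi fun _ : Fin N => s)) :=
    (isCompact_stdSimplex ℝ (Fin N)).prod (isCompact_univ_pi fun _ => hs)
  have hcont : Continuous fun p : (Fin N → ℝ) × (Fin N → E) => ∑ i, p.1 i • p.2 i := by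
    fun_prop
  convert hK.image hcont using 1
  ext x
  constructor
  · intro hx
    obtain ⟨ι, _, z, w, hz, hind, hw₀, hw₁, rfl⟩ := eq_pos_convex_span_of_mem_convexHull hx
    have hcard : Fintype.card ι ≤ Fintype.card (Fin N) := by
      rw [Fintype.card_fin]
      exact hind.card_le_finrank_succ.trans (Nat.succ_le_succ (Submodule.finrank_le _))
    obtain ⟨g⟩ := Function.Embedding.nonempty_of_card_le hcard
    have hgw : ∀ i, w i = Function.extend g w 0 (g i) := fun i =>
      (g.injective.extend_apply w 0 i).symm
    have hgz : ∀ i, z i = Function.extend g z (fun _ => x₀) (g i) := fun i =>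
      (g.injective.extend_apply z _ i).symm
    refine ⟨(Function.extend g w 0, Function.extend g z fun _ => x₀), ⟨⟨fun k => ?_, ?_⟩, ?_⟩, ?_⟩
    · by_cases hk : ∃ i, g i = k
      · obtain ⟨i, rfl⟩ := hk
        exact (hw₀ i).le.trans_eq (hgw i)
      · simp [Function.extend_apply' _ _ _ hk]
    · rw [← hw₁]
      refine (Fintype.sum_of_injective g g.injective _ _ (fun k hk => ?_) hgw).symm
      exact Function.extend_apply' _ _ _ hk
    · intro k _
      by_cases hk : ∃ i, g i = k
      · obtain ⟨i, rfl⟩ := hk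
        exact Set.mem_of_eq_of_mem (hgz i).symm (hz ⟨i, rfl⟩)
      · simpa [Function.extend_apply' _ _ _ hk] using hx₀
    · refine (Fintype.sum_of_injective g g.injective _ _ (fun k hk => ?_) fun i => ?_).symm
      · have hk' : Function.extend g w 0 k = 0 := Function.extend_apply' _ _ _ hk
        simp only [hk', zero_smul]
      · simp only [← hgw, ← hgz]
  · rintro ⟨⟨w, z⟩, ⟨hw, hz⟩, rfl⟩
    exact mem_convexHull_of_exists_fintype w z hw.1 hw.2 (fun i => hz i trivial) rfl

/-- Leading terms of real squares cannot cancel: each summand of a sum of squares has at most half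
the degree of the sum. -/
lemma MvPolynomial.two_mul_totalDegree_le_of_sum_sq {n : ℕ} {ι : Type*} [Fintype ι]
    (u : ι → MvPolynomial (Fin n) ℝ) (i : ι) :
    2 * (u i).totalDegree ≤ (∑ j, u j ^ 2).totalDegree := by
  have : Nonempty ι := ⟨i⟩
  obtain ⟨k, hk⟩ := Finite.exists_max fun j =>
    MonomialOrder.degLex.toSyn (MonomialOrder.degLex.degree (u j))
  refine (Nat.mul_le_mul_left 2 (degLex_totalDegree_monotone (hk i))).trans ?_
  rcases eq_or_ne (u k) 0 with h0 | h0
  · simp [h0]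
  set δ := MonomialOrder.degLex.degree (u k) with hδ
  have hcoeff : (∑ j, u j ^ 2).coeff (δ + δ) = ∑ j, (u j).coeff δ ^ 2 := by
    rw [coeff_sum]
    refine Finset.sum_congr rfl fun j _ => ?_
    rw [sq, sq, MonomialOrder.coeff_mul_of_add_of_degree_le (hk j) (hk j)]
  have hpos : 0 < ∑ j, (u j).coeff δ ^ 2 := by
    refine Finset.sum_pos' (fun j _ => sq_nonneg _) ⟨k, Finset.mem_univ k, ?_⟩
    exact sq_pos_of_ne_zero (MonomialOrder.leadingCoeff_ne_zero_iff.2 h0)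
  have hmem : δ + δ ∈ (∑ j, u j ^ 2).support := by
    rw [mem_support_iff, hcoeff]
    exact hpos.ne'
  have hle := le_totalDegree hmem
  rw [← degree_degLexDegree, ← hδ]
  have : (δ + δ).degree = 2 * δ.degree := by rw [map_add, two_mul]
  rw [← this]
  exact hle

/-- The polynomial with coefficient `x i` at the exponent `s i`. -/
noncomputable def polyOf {n : ℕ} {ι : Type*} [Fintype ι] (s : ι → Fin n →₀ ℕ) :
    (ι → ℝ) →ₗ[ℝ] MvPolynomial (Fin n) ℝ :=
  Fintype.linearCombination ℝ fun i => monomial (s i) 1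

lemma polyOf_apply {n : ℕ} {ι : Type*} [Fintype ι] (s : ι → Fin n →₀ ℕ) (x : ι → ℝ) :
    polyOf s x = ∑ i, x i • monomial (s i) 1 := rfl

lemma coeff_polyOf {n : ℕ} {ι : Type*} [Fintype ι] {s : ι → Fin n →₀ ℕ}
    (hs : Function.Injective s) (x : ι → ℝ) (i : ι) : (polyOf s x).coeff (s i) = x i := by
  classical
  simp [polyOf_apply, coeff_sum, coeff_monomial, hs.eq_iff]

lemma coeff_polyOf_of_notMem {n : ℕ} {ι : Type*} [Fintype ι] {s : ι → Fin n →₀ ℕ}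
    (x : ι → ℝ) {α : Fin n →₀ ℕ} (hα : α ∉ Set.range s) : (polyOf s x).coeff α = 0 := by
  classical
  rw [polyOf_apply, coeff_sum]
  refine Finset.sum_eq_zero fun i _ => ?_
  rw [coeff_smul, coeff_monomial, if_neg fun h => hα ⟨i, h⟩, smul_zero]

lemma polyOf_injective {n : ℕ} {ι : Type*} [Fintype ι] {s : ι → Fin n →₀ ℕ}
    (hs : Function.Injective s) : Function.Injective (polyOf s) := fun x x' h => by
  ext i
  rw [← coeff_polyOf hs x, h, coeff_polyOf hs]

lemma polyOf_coeff {n : ℕ} {ι : Type*} [Fintype ι] {s : ι → Fin n →₀ ℕ}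
    (hs : Function.Injective s) {p : MvPolynomial (Fin n) ℝ}
    (hp : ∀ α ∈ p.support, α ∈ Set.range s) : polyOf s (fun i => p.coeff (s i)) = p := by
  ext α
  by_cases hα : α ∈ Set.range s
  · obtain ⟨i, rfl⟩ := hα
    rw [coeff_polyOf hs]
  · rw [coeff_polyOf_of_notMem _ hα]
    exact (notMem_support_iff.1 fun h => hα (hp α h)).symm

lemma totalDegree_polyOf_le {n d : ℕ} {ι : Type*} [Fintype ι] {s : ι → Fin n →₀ ℕ}
    (hs : ∀ i, (s i).degree ≤ d) (x : ι → ℝ) : (polyOf s x).totalDegree ≤ d := by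
  refine Finset.sup_le fun α hα => ?_
  by_cases h : α ∈ Set.range s
  · obtain ⟨i, rfl⟩ := h
    exact hs i
  · exact absurd (coeff_polyOf_of_notMem x h) (mem_support_iff.1 hα)

lemma mul_polyOf_sq {n : ℕ} {ι : Type*} [Fintype ι] (s : ι → Fin n →₀ ℕ)
    (q : MvPolynomial (Fin n) ℝ) (x : ι → ℝ) :
    q * polyOf s x ^ 2 = ∑ i, ∑ j, (x i * x j) • (q * monomial (s i + s j) 1) := by
  rw [polyOf_apply, sq, Finset.sum_mul_sum]
  simp only [Finset.mul_sum]
  refine Finset.sum_congr rfl fun i _ => Finset.sum_congr rfl fun j _ => ?_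
  rw [smul_mul_smul_comm, monomial_mul, mul_one, mul_smul_comm]

lemma map_mul_monomial {n : ℕ} (Λ : MvPolynomial (Fin n) ℝ →ₗ[ℝ] ℝ)
    (q : MvPolynomial (Fin n) ℝ) (α : Fin n →₀ ℕ) :
    Λ (q * monomial α 1) = ∑ γ ∈ q.support, q.coeff γ * Λ (monomial (γ + α) 1) := by
  conv_lhs => rw [q.as_sum, Finset.sum_mul, map_sum]
  refine Finset.sum_congr rfl fun γ _ => ?_
  rw [monomial_mul, mul_one, ← smul_eq_mul, ← map_smul, smul_monomial, smul_eq_mul, mul_one]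

open Matrix in
lemma dotProduct_momentMatrix_mulVec {n t : ℕ} (Λ : MvPolynomial (Fin n) ℝ →ₗ[ℝ] ℝ)
    (x : Idx n t → ℝ) :
    x ⬝ᵥ (momentMatrix n t (fun α => Λ (monomial α 1)) *ᵥ x) =
      Λ (polyOf Subtype.val x ^ 2) := by
  rw [← one_mul (polyOf _ x ^ 2), mul_polyOf_sq]
  simp only [map_sum, map_smul, one_mul, dotProduct, mulVec, Finset.mul_sum, momentMatrix,
    smul_eq_mul]
  exact Finset.sum_congr rfl fun i _ => Finset.sum_congr rfl fun j _ => by ring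

open Matrix in
lemma dotProduct_locMomentMatrixOn_mulVec {n : ℕ} {𝒯 : Finset (Fin n →₀ ℕ)}
    (Λ : MvPolynomial (Fin n) ℝ →ₗ[ℝ] ℝ) (q : MvPolynomial (Fin n) ℝ) (x : 𝒯 → ℝ) :
    x ⬝ᵥ (locMomentMatrixOn n 𝒯 q (fun α => Λ (monomial α 1)) *ᵥ x) =
      Λ (q * polyOf Subtype.val x ^ 2) := by
  rw [mul_polyOf_sq]
  simp only [map_sum, map_smul, dotProduct, mulVec, Finset.mul_sum, locMomentMatrixOn,
    smul_eq_mul, map_mul_monomial, Finset.sum_mul, add_assoc]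
  exact Finset.sum_congr rfl fun i _ => Finset.sum_congr rfl fun j _ =>
    Finset.sum_congr rfl fun γ _ => by ring

open Matrix in
/-- A rational sum-of-squares certificate forces every feasible `s` to be nonnegative. -/
lemma RSOS.nonneg_of_feasible {n e d : ℕ} {f : MvPolynomial (Fin n) ℝ}
    {𝒯 : Finset (Fin n →₀ ℕ)} (h𝒯 : ∀ α ∈ 𝒯, α.degree ≤ e) (hd : f.totalDegree + 2 * e ≤ 2 * d)
    (hf : RSOS n 𝒯 f) {y : (Fin n →₀ ℕ) → ℝ} {s : ℝ} (hM : (momentMatrix n d y).PosSemidef)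
    (hloc : (locMomentMatrixOn n 𝒯 (-f) y + s • (1 : Matrix 𝒯 𝒯 ℝ)).PosSemidef) : 0 ≤ s := by
  obtain ⟨l, l', u, v, hv, hne, heq⟩ := hf
  let Λ : MvPolynomial (Fin n) ℝ →ₗ[ℝ] ℝ := (basisMonomials (Fin n) ℝ).constr ℝ y
  have hΛ : y = fun α => Λ (monomial α 1) := by
    funext α
    have h := congrFun (coe_basisMonomials (Fin n) ℝ) α
    rw [← h]
    exact ((basisMonomials (Fin n) ℝ).constr_basis ℝ y α).symm
  rw [hΛ] at hM hloc
  have hvpoly : ∀ j, polyOf (Subtype.val : 𝒯 → _) (fun i => (v j).coeff i.1) = v j := fun j =>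
    polyOf_coeff Subtype.val_injective fun α hα => ⟨⟨α, hv j hα⟩, rfl⟩
  have hvdeg : ∀ j, (v j).totalDegree ≤ e := fun j => by
    rw [← hvpoly j]
    exact totalDegree_polyOf_le (s := Subtype.val) (fun i : 𝒯 => h𝒯 i.1 i.2) _
  have hsum : (∑ j, v j ^ 2).totalDegree ≤ 2 * e :=
    (totalDegree_finsetSum _ _).trans <| Finset.sup_le fun j _ =>
      (totalDegree_pow _ _).trans (Nat.mul_le_mul_left 2 (hvdeg j))
  have hudeg : ∀ i, (u i).totalDegree ≤ d := fun i => by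
    have h₁ := two_mul_totalDegree_le_of_sum_sq u i
    rw [← heq] at h₁
    have h₂ := totalDegree_mul f (∑ j, v j ^ 2)
    omega
  have hu : ∀ i, 0 ≤ Λ (u i ^ 2) := fun i => by
    have hupoly : polyOf (Subtype.val : Idx n d → _) (fun k => (u i).coeff k.1) = u i :=
      polyOf_coeff Subtype.val_injective fun α hα =>
        ⟨⟨α, (le_totalDegree hα).trans (hudeg i)⟩, rfl⟩
    rw [← hupoly, ← dotProduct_momentMatrix_mulVec]
    exact hM.dotProduct_mulVec_nonneg _
  have hvΛ : ∀ j, Λ (f * v j ^ 2) ≤ s * ∑ i : 𝒯, (v j).coeff i.1 ^ 2 := fun j => by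
    have h := hloc.dotProduct_mulVec_nonneg fun i : 𝒯 => (v j).coeff i.1
    rw [star_trivial, add_mulVec, dotProduct_add, dotProduct_locMomentMatrixOn_mulVec, hvpoly,
      smul_mulVec, one_mulVec, dotProduct_smul, neg_mul, map_neg] at h
    simp only [dotProduct, ← sq, smul_eq_mul] at h
    linarith
  have hkey : 0 ≤ s * ∑ j, ∑ i : 𝒯, (v j).coeff i.1 ^ 2 := by
    calc 0 ≤ ∑ i, Λ (u i ^ 2) := Finset.sum_nonneg fun i _ => hu i
      _ = ∑ j, Λ (f * v j ^ 2) := by rw [← map_sum, ← map_sum, ← heq, Finset.mul_sum]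
      _ ≤ ∑ j, s * ∑ i : 𝒯, (v j).coeff i.1 ^ 2 := Finset.sum_le_sum fun j _ => hvΛ j
      _ = _ := by rw [Finset.mul_sum]
  refine nonneg_of_mul_nonneg_left hkey ?_
  refine (Finset.sum_nonneg fun j _ => Finset.sum_nonneg fun i _ => sq_nonneg _).lt_of_ne' ?_
  intro h0
  refine hne (Finset.sum_eq_zero fun j _ => ?_)
  rw [Finset.sum_eq_zero_iff_of_nonneg fun j _ => Finset.sum_nonneg fun i _ => sq_nonneg _] at h0
  have h1 := h0 j (Finset.mem_univ j)
  rw [Finset.sum_eq_zero_iff_of_nonneg fun i _ => sq_nonneg _] at h1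
  have h2 : (fun i : 𝒯 => (v j).coeff i.1) = 0 := by
    funext i
    exact pow_eq_zero_iff two_ne_zero |>.1 (h1 i (Finset.mem_univ i))
  rw [← hvpoly j, h2, map_zero, zero_pow two_ne_zero]

/-- The polynomial `f · v² - u²`, where `v` and `u` have the two blocks of `z` as coefficients. -/
noncomputable def certPoly {n : ℕ} (d : ℕ) (𝒯 : Finset (Fin n →₀ ℕ))
    (f : MvPolynomial (Fin n) ℝ) (z : 𝒯 ⊕ Idx n d → ℝ) : MvPolynomial (Fin n) ℝ :=
  f * polyOf (Subtype.val : 𝒯 → _) (z ∘ Sum.inl) ^ 2 -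
    polyOf (Subtype.val : Idx n d → _) (z ∘ Sum.inr) ^ 2

lemma certPoly_smul {n d : ℕ} {𝒯 : Finset (Fin n →₀ ℕ)} {f : MvPolynomial (Fin n) ℝ}
    (c : ℝ) (z : 𝒯 ⊕ Idx n d → ℝ) : certPoly d 𝒯 f (c • z) = c ^ 2 • certPoly d 𝒯 f z := by
  have h₁ : (c • z) ∘ Sum.inl = c • (z ∘ Sum.inl) := rfl
  have h₂ : (c • z) ∘ Sum.inr = c • (z ∘ Sum.inr) := rfl
  rw [certPoly, h₁, h₂, map_smul, map_smul, smul_pow, smul_pow, mul_smul_comm, ← smul_sub,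
    certPoly]

lemma totalDegree_certPoly_le {n e d : ℕ} {f : MvPolynomial (Fin n) ℝ}
    {𝒯 : Finset (Fin n →₀ ℕ)} (h𝒯 : ∀ α ∈ 𝒯, α.degree ≤ e) (hd : f.totalDegree + 2 * e ≤ 2 * d)
    (z : 𝒯 ⊕ Idx n d → ℝ) : (certPoly d 𝒯 f z).totalDegree ≤ 2 * d := by
  refine (totalDegree_sub _ _).trans (max_le ?_ ?_)
  · have h₁ := totalDegree_polyOf_le (fun i : 𝒯 => h𝒯 i.1 i.2) (z ∘ Sum.inl)
    have h₂ := totalDegree_pow (polyOf (Subtype.val : 𝒯 → _) (z ∘ Sum.inl)) 2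
    have h₃ := totalDegree_mul f (polyOf (Subtype.val : 𝒯 → _) (z ∘ Sum.inl) ^ 2)
    omega
  · have h₁ := totalDegree_polyOf_le (fun i : Idx n d => i.2) (z ∘ Sum.inr)
    have h₂ := totalDegree_pow (polyOf (Subtype.val : Idx n d → _) (z ∘ Sum.inr)) 2
    omega

/-- The coefficients of total degree at most `D`. -/
noncomputable def coeffMap (n D : ℕ) : MvPolynomial (Fin n) ℝ →ₗ[ℝ] (Idx n D → ℝ) :=
  LinearMap.pi fun α => lcoeff ℝ α.1

lemma eq_zero_of_coeffMap_eq_zero {n D : ℕ} {p : MvPolynomial (Fin n) ℝ}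
    (hp : p.totalDegree ≤ D) (h : coeffMap n D p = 0) : p = 0 := by
  ext α
  rw [coeff_zero]
  by_contra hα
  exact hα (congrFun h ⟨α, (le_totalDegree (mem_support_iff.2 hα)).trans hp⟩)

lemma continuous_coeffMap_certPoly {n d : ℕ} (D : ℕ) (𝒯 : Finset (Fin n →₀ ℕ))
    (f : MvPolynomial (Fin n) ℝ) :
    Continuous fun z : EuclideanSpace ℝ (𝒯 ⊕ Idx n d) => coeffMap n D (certPoly d 𝒯 f z) := by
  have h : ∀ z : EuclideanSpace ℝ (𝒯 ⊕ Idx n d), coeffMap n D (certPoly d 𝒯 f z) =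
      (∑ i : 𝒯, ∑ j : 𝒯, (z (Sum.inl i) * z (Sum.inl j)) •
        coeffMap n D (f * monomial (i.1 + j.1) 1)) -
      ∑ i : Idx n d, ∑ j : Idx n d, (z (Sum.inr i) * z (Sum.inr j)) •
        coeffMap n D (1 * monomial (i.1 + j.1) 1) := fun z => by
    rw [certPoly, ← one_mul (polyOf (Subtype.val : Idx n d → _) _ ^ 2), mul_polyOf_sq,
      mul_polyOf_sq]
    simp only [map_sub, map_sum, map_smul, Function.comp_apply]
  simp only [h]
  fun_prop

/-- A vanishing sum of nontrivial certificate polynomials yields a certificate. -/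
lemma rsos_of_sum_certPoly_eq_zero {n d : ℕ} {𝒯 : Finset (Fin n →₀ ℕ)}
    {f : MvPolynomial (Fin n) ℝ} {ι : Type*} [Fintype ι] (z : ι → 𝒯 ⊕ Idx n d → ℝ)
    (hz : ∃ i, z i ≠ 0) (hsum : ∑ i, certPoly d 𝒯 f (z i) = 0) : RSOS n 𝒯 f := by
  let v : ι → MvPolynomial (Fin n) ℝ := fun i => polyOf (Subtype.val : 𝒯 → _) (z i ∘ Sum.inl)
  let u : ι → MvPolynomial (Fin n) ℝ := fun i =>
    polyOf (Subtype.val : Idx n d → _) (z i ∘ Sum.inr)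
  have heq : f * ∑ i, v i ^ 2 = ∑ i, u i ^ 2 := by
    rw [← sub_eq_zero, Finset.mul_sum, ← Finset.sum_sub_distrib]
    exact hsum
  have hsq : ∀ w : ι → MvPolynomial (Fin n) ℝ, ∑ i, w i ^ 2 = 0 → ∀ i, w i = 0 := by
    intro w hw i
    refine MvPolynomial.funext fun a => ?_
    have h : ∑ i, eval a (w i) ^ 2 = 0 := by
      simpa using congrArg (eval a) hw
    rw [Finset.sum_eq_zero_iff_of_nonneg fun i _ => sq_nonneg _] at h
    simpa using h i (Finset.mem_univ i)
  let g := (Fintype.equivFin ι).symm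
  refine ⟨_, _, u ∘ g, v ∘ g, fun j α hα => ?_, ?_, ?_⟩
  · by_contra hα'
    refine mem_support_iff.1 hα (coeff_polyOf_of_notMem _ ?_)
    rwa [Subtype.range_coe]
  · rw [show ∑ j, (v ∘ g) j ^ 2 = ∑ i, v i ^ 2 from g.sum_comp fun i => v i ^ 2]
    intro h0
    obtain ⟨i, hi⟩ := hz
    have hv := hsq v h0 i
    have hu := hsq u (by rw [← heq, h0, mul_zero]) i
    have hv' := polyOf_injective Subtype.val_injective (hv.trans (map_zero _).symm)
    have hu' := polyOf_injective Subtype.val_injective (hu.trans (map_zero _).symm)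
    refine hi (funext fun k => ?_)
    rcases k with k | k
    · exact congrFun hv' k
    · exact congrFun hu' k
  · rw [show ∑ j, (v ∘ g) j ^ 2 = ∑ i, v i ^ 2 from g.sum_comp fun i => v i ^ 2, heq]
    exact (g.sum_comp fun i => u i ^ 2).symm

/-- Without a certificate, a linear functional separates the certificate polynomials from `0`. -/
lemma exists_functional_of_not_rsos {n e d : ℕ} {f : MvPolynomial (Fin n) ℝ}
    {𝒯 : Finset (Fin n →₀ ℕ)} (h𝒯 : ∀ α ∈ 𝒯, α.degree ≤ e) (hd : f.totalDegree + 2 * e ≤ 2 * d)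
    (hf : ¬ RSOS n 𝒯 f) :
    ∃ (Λ : MvPolynomial (Fin n) ℝ →ₗ[ℝ] ℝ) (c : ℝ), 0 < c ∧
      ∀ z : 𝒯 ⊕ Idx n d → ℝ, c * ∑ k, z k ^ 2 ≤ Λ (certPoly d 𝒯 f z) := by
  let Φ : EuclideanSpace ℝ (𝒯 ⊕ Idx n d) → Idx n (2 * d) → ℝ := fun z =>
    coeffMap n (2 * d) (certPoly d 𝒯 f z)
  let K := convexHull ℝ (Φ '' Metric.sphere 0 1)
  have hK : IsClosed K := (((isCompact_sphere 0 1).image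
    (continuous_coeffMap_certPoly _ 𝒯 f)).convexHull_of_finiteDimensional).isClosed
  have h0 : (0 : Idx n (2 * d) → ℝ) ∉ K := by
    intro h0
    obtain ⟨ι, _, w, x, hw₀, hw₁, hx, hsum⟩ := mem_convexHull_iff_exists_fintype.1 h0
    choose z hz hzx using hx
    refine hf (rsos_of_sum_certPoly_eq_zero (fun i => √(w i) • (z i : 𝒯 ⊕ Idx n d → ℝ)) ?_ ?_)
    · by_contra! hall
      have hw : ∀ i, w i = 0 := fun i => by
        rcases smul_eq_zero.1 (hall i) with h | h
        · exact (Real.sqrt_eq_zero (hw₀ i)).1 h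
        · have hzi : z i = 0 := by
            ext k
            exact congrFun h k
          have := hz i
          simp [hzi] at this
      simp [hw] at hw₁
    · refine eq_zero_of_coeffMap_eq_zero (D := 2 * d) ?_ ?_
      · exact (totalDegree_finsetSum _ _).trans
          (Finset.sup_le fun i _ => totalDegree_certPoly_le h𝒯 hd _)
      · rw [← hsum, map_sum]
        refine Finset.sum_congr rfl fun i _ => ?_
        rw [certPoly_smul, map_smul, Real.sq_sqrt (hw₀ i), ← hzx]
  obtain ⟨L, c, hLc, hcL⟩ := geometric_hahn_banach_point_closed (convex_convexHull ℝ _) hK h0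
  rw [map_zero] at hLc
  refine ⟨L.toLinearMap ∘ₗ coeffMap n (2 * d), c, hLc, fun z => ?_⟩
  let z' : EuclideanSpace ℝ (𝒯 ⊕ Idx n d) := WithLp.toLp 2 z
  have hnorm : ∑ k, z k ^ 2 = ‖z'‖ ^ 2 := (EuclideanSpace.real_norm_sq_eq z').symm
  rw [hnorm]
  rcases eq_or_ne z' 0 with h | h
  · have hz : z = 0 := by
      funext k
      exact congrArg (fun t : EuclideanSpace ℝ (𝒯 ⊕ Idx n d) => t k) h
    have : certPoly d 𝒯 f z = 0 := by
      simpa [hz] using certPoly_smul (d := d) (𝒯 := 𝒯) (f := f) 0 0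
    simp [h, this]
  · have hpos : 0 < ‖z'‖ := norm_pos_iff.2 h
    have hmem : Φ (‖z'‖⁻¹ • z') ∈ K := by
      refine subset_convexHull ℝ _ ⟨_, ?_, rfl⟩
      rw [mem_sphere_zero_iff_norm, norm_smul, norm_inv, norm_norm, inv_mul_cancel₀ hpos.ne']
    have hval : Φ (‖z'‖⁻¹ • z') = (‖z'‖⁻¹) ^ 2 • coeffMap n (2 * d) (certPoly d 𝒯 f z) := by
      rw [← map_smul, ← certPoly_smul]
      rfl
    have hlt := hcL _ hmem
    rw [hval, map_smul, smul_eq_mul, inv_pow, inv_mul_eq_div, lt_div_iff₀ (by positivity)] at hlt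
    exact hlt.le

open Matrix in
/-- Without a certificate, feasible `s` can be taken arbitrarily negative. -/
lemma exists_feasible_of_not_rsos {n e d : ℕ} {f : MvPolynomial (Fin n) ℝ}
    {𝒯 : Finset (Fin n →₀ ℕ)} (h𝒯 : ∀ α ∈ 𝒯, α.degree ≤ e) (hd : f.totalDegree + 2 * e ≤ 2 * d)
    (hf : ¬ RSOS n 𝒯 f) {r : ℝ} (hr : 0 ≤ r) :
    ∃ y : (Fin n →₀ ℕ) → ℝ, (momentMatrix n d y).PosSemidef ∧
      (locMomentMatrixOn n 𝒯 (-f) y + (-r) • (1 : Matrix 𝒯 𝒯 ℝ)).PosSemidef := by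
  obtain ⟨Λ, c, hc, hΛ⟩ := exists_functional_of_not_rsos h𝒯 hd hf
  let Λ' : MvPolynomial (Fin n) ℝ →ₗ[ℝ] ℝ := (-(r / c)) • Λ
  refine ⟨fun α => Λ' (monomial α 1), .of_dotProduct_mulVec_nonneg ?_ fun x => ?_,
    .of_dotProduct_mulVec_nonneg ?_ fun x => ?_⟩
  · exact IsHermitian.ext fun i j => by simp only [momentMatrix, star_trivial, add_comm]
  · rw [star_trivial, dotProduct_momentMatrix_mulVec]
    have h := hΛ (Sum.elim 0 x)
    simp only [certPoly, Sum.elim_comp_inl, Sum.elim_comp_inr, map_zero, ne_eq, two_ne_zero,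
      not_false_eq_true, zero_pow, mul_zero, zero_sub, map_neg] at h
    have h' : 0 ≤ c * ∑ k, Sum.elim (0 : 𝒯 → ℝ) x k ^ 2 := by positivity
    have : 0 ≤ r / c * -Λ (polyOf Subtype.val x ^ 2) := mul_nonneg (by positivity) (h'.trans h)
    simpa [Λ'] using this
  · refine IsHermitian.add (IsHermitian.ext fun i j => ?_) ?_
    · simp only [locMomentMatrixOn, star_trivial, add_assoc, add_comm i.1]
    · exact IsHermitian.ext fun i j => by simp [one_apply, eq_comm]
  · rw [star_trivial, add_mulVec, dotProduct_add, dotProduct_locMomentMatrixOn_mulVec,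
      smul_mulVec, one_mulVec, dotProduct_smul]
    have h := hΛ (Sum.elim x 0)
    simp only [certPoly, Sum.elim_comp_inl, Sum.elim_comp_inr, map_zero, ne_eq, two_ne_zero,
      not_false_eq_true, zero_pow, sub_zero, Fintype.sum_sum_type, Sum.elim_inl, Sum.elim_inr,
      Pi.zero_apply, Finset.sum_const_zero, add_zero] at h
    have h' := mul_le_mul_of_nonneg_left h (div_nonneg hr hc.le)
    rw [← mul_assoc, div_mul_cancel₀ r hc.ne'] at h'
    simp only [Λ', LinearMap.smul_apply, neg_mul, map_neg, smul_eq_mul, dotProduct, ← sq]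
    linarith

/-- with `d = e + ⌈deg f / 2⌉`, `f ∉ RSOS(𝒯)` iff the SDP
`inf { s : M_d(y) ⪰ 0, M_e((−f)y) + s·I ⪰ 0 }` has optimal value `−∞`, i.e. for
every `s₀ ∈ ℝ` there are `y` and `s < s₀` with `M_d(y) ⪰ 0` and
`M_e((−f)y) + s·I ⪰ 0` (the localizing matrix being indexed by the exponents of
the monomials in `𝒯`). -/
theorem statement5 (n e : ℕ) (f : MvPolynomial (Fin n) ℝ)
    (𝒯 : Finset (Fin n →₀ ℕ)) (h𝒯 : ∀ α ∈ 𝒯, α.degree ≤ e) :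
    ¬ RSOS n 𝒯 f ↔
      ∀ s₀ : ℝ, ∃ (y : (Fin n →₀ ℕ) → ℝ) (s : ℝ), s < s₀ ∧
        (momentMatrix n (e + (f.totalDegree + 1) / 2) y).PosSemidef ∧
        (locMomentMatrixOn n 𝒯 (-f) y + s • (1 : Matrix 𝒯 𝒯 ℝ)).PosSemidef := by
  have hd : f.totalDegree + 2 * e ≤ 2 * (e + (f.totalDegree + 1) / 2) := by omega
  constructor
  · intro hf s₀
    obtain ⟨y, hM, hloc⟩ := exists_feasible_of_not_rsos h𝒯 hd hf (r := |s₀| + 1) (by positivity)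
    exact ⟨y, _, by linarith [neg_abs_le s₀], hM, hloc⟩
  · intro h hf
    obtain ⟨y, s, hs, hM, hloc⟩ := h 0
    exact hs.not_ge (hf.nonneg_of_feasible h𝒯 hd hM hloc)
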